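/- Let Γ be a reduced, non-ascending labeled graph with all labels positive, let e, f be mobile edges of Γ with f ∉ {e, ē}, and let A, A′, B be edge paths none of whose edges lies in {e, ē, f, f̄}. Suppose that in Γ the edge e can slide over the concatenated path A·f·A′ and that afterwards f can slide over B (every single slide valid, every intermediate graph reduced). Then, starting again from Γ, f can slide over B and afterwards e can slide over the concatenated path A·B·f·A′, and the two composite slide sequences produce the same labeled graph. -/

import Mathlib

/-! Labeled graphs in the sense of generalized Baumslag–Solitar theory. -/

structure LGraph (V E : Type) where
  o : E → V
  bar : E → E
  bar_bar : ∀ e, bar (bar e) = e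
  bar_ne : ∀ e, bar e ≠ e
  lab : E → ℤ

namespace LGraph

variable {V E V' E' : Type}

/-- Terminal vertex of an oriented edge. -/
def t (G : LGraph V E) (e : E) : V := G.o (G.bar e)

/-- All labels are positive. -/
def Positive (G : LGraph V E) : Prop := ∀ e : E, 0 < G.lab e

/-- No collapsible edge: every label-1 edge is a loop. -/
def Reduced (G : LGraph V E) : Prop := ∀ e : E, G.lab e = 1 → G.o e = G.t e

/-- An `n`-rose: one vertex and `n` pairs of oriented edges. -/
def IsRose (G : LGraph V E) (n : ℕ) : Prop :=
  Nat.card V = 1 ∧ Nat.card E = 2 * n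

/-- Modulus of a single oriented edge: `λ(ē)/λ(e)`. -/
def qe (G : LGraph V E) (e : E) : ℚ := (G.lab (G.bar e) : ℚ) / (G.lab e : ℚ)

/-- Modulus of an edge path. -/
def q (G : LGraph V E) (l : List E) : ℚ := (l.map G.qe).prod

/-- Consecutive edges match up. -/
def IsEdgePath (G : LGraph V E) (l : List E) : Prop :=
  List.Chain' (fun a b => G.t a = G.o b) l

/-- An `e`-edge path. -/
def IsEEdgePath (G : LGraph V E) (e : E) (l : List E) : Prop :=
  G.IsEdgePath l ∧
  (∀ a ∈ l, a ≠ e ∧ a ≠ G.bar e) ∧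
  (∀ a ∈ l.head?, G.o a = G.o e) ∧
  ∀ i : Fin l.length, ∃ k : ℤ,
    (G.lab e : ℚ) * G.q (l.take i.1) = (k : ℚ) * (G.lab (l.get i) : ℚ)

/-- A monotone cycle `(e₁,…,eₛ,e)`. -/
def IsMonotoneCycle (G : LGraph V E) (l : List E) (e : E) : Prop :=
  G.IsEEdgePath (G.bar e) l ∧
  G.t (l.getLastD e) = G.o e ∧
  ∃ k : ℤ, G.q (l ++ [e]) = (k : ℚ)

/-- A strict monotone cycle. -/
def IsStrictMonotoneCycle (G : LGraph V E) (l : List E) (e : E) : Prop :=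
  G.IsMonotoneCycle l e ∧ G.q (l ++ [e]) ≠ 1

def HasStrictMonotoneCycle (G : LGraph V E) : Prop :=
  ∃ (l : List E) (e : E), G.IsStrictMonotoneCycle l e

/-- A strict `e`-integer cycle. -/
def IsStrictIntegerCycle (G : LGraph V E) (e : E) (l : List E) : Prop :=
  G.IsEEdgePath e l ∧ l ≠ [] ∧
  G.t (l.getLastD e) = G.o (l.headD e) ∧
  (∃ k : ℤ, G.q l = (k : ℚ)) ∧ G.q l ≠ 1

/-- A mobile edge. -/
def Mobile (G : LGraph V E) (e : E) : Prop :=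
  (∃ l, G.IsStrictMonotoneCycle l e ∨ G.IsStrictMonotoneCycle l (G.bar e)) ∨
  (∃ l, G.IsStrictIntegerCycle e l ∨ G.IsStrictIntegerCycle (G.bar e) l)

/-- The single slide of `e` over `f` is permitted. -/
def CanSlide (G : LGraph V E) (e f : E) : Prop :=
  f ≠ e ∧ f ≠ G.bar e ∧ G.o f = G.o e ∧ G.lab f ∣ G.lab e

open Classical in
/-- The result of the single slide of `e` over `f`. -/
noncomputable def slide (G : LGraph V E) (e f : E) : LGraph V E where
  o := fun x => if x = e then G.t f else G.o x
  bar := G.bar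
  bar_bar := G.bar_bar
  bar_ne := G.bar_ne
  lab := fun x => if x = e then G.lab e * G.lab (G.bar f) / G.lab f else G.lab x

/-- Successively slide `e` over the edges of a path. -/
noncomputable def slidePath : LGraph V E → E → List E → LGraph V E
  | G, _, [] => G
  | G, e, f :: l => slidePath (G.slide e f) e l

/-- Each single slide in the successive slide of `e` over a path is permitted. -/
def CanSlidePath : LGraph V E → E → List E → Prop
  | _, _, [] => True
  | G, e, f :: l => G.CanSlide e f ∧ CanSlidePath (G.slide e f) e l

/-- Each single slide is permitted and each intermediate graph is reduced. -/
def GoodSlidePath : LGraph V E → E → List E → Prop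
  | _, _, [] => True
  | G, e, f :: l => G.CanSlide e f ∧ (G.slide e f).Reduced ∧ GoodSlidePath (G.slide e f) e l

/-- Perform a finite sequence of single slides, given as pairs (slid edge, edge slid over). -/
noncomputable def slideSeq : LGraph V E → List (E × E) → LGraph V E
  | G, [] => G
  | G, p :: rest => slideSeq (G.slide p.1 p.2) rest

/-- A sequence of permitted single slides, each sliding a mobile edge. -/
def MobileSlideSeq : LGraph V E → List (E × E) → Prop
  | _, [] => True
  | G, p :: rest => G.Mobile p.1 ∧ G.CanSlide p.1 p.2 ∧ MobileSlideSeq (G.slide p.1 p.2) rest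

/-- Isomorphism of labeled graphs. -/
def Isom (G : LGraph V E) (G' : LGraph V' E') : Prop :=
  ∃ (φ : V → V') (Φ : E → E'),
    Function.Bijective φ ∧ Function.Bijective Φ ∧
    (∀ x, G'.o (Φ x) = φ (G.o x)) ∧
    (∀ x, G'.bar (Φ x) = Φ (G.bar x)) ∧
    (∀ x, G'.lab (Φ x) = G.lab x)

open Classical in
/-- The result of the induction move at the loop `e` with multiplier `m`. -/
noncomputable def inductionMove (G : LGraph V E) (e : E) (m : ℤ) : LGraph V E where
  o := G.o
  bar := G.bar
  bar_bar := G.bar_bar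
  bar_ne := G.bar_ne
  lab := fun x => if x ≠ e ∧ x ≠ G.bar e ∧ G.o x = G.o e then m * G.lab x else G.lab x

/-- `G'` is obtained from `G` by a single slide move (up to isomorphism). -/
def IsSlideMove (G : LGraph V E) (G' : LGraph V' E') : Prop :=
  ∃ e f, G.CanSlide e f ∧ Isom G' (G.slide e f)

/-- `G'` is obtained from `G` by a (forward) induction move. -/
def IsInductionMove (G : LGraph V E) (G' : LGraph V' E') : Prop :=
  ∃ (e : E) (m : ℤ), G.o e = G.t e ∧ G.lab e = 1 ∧ 1 ≤ m ∧ m ∣ G.lab (G.bar e) ∧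
    Isom G' (G.inductionMove e m)

/-- `G'` is obtained from `G` by an A-move. -/
def IsAMove (G : LGraph V E) (G' : LGraph V' E') : Prop :=
  ∃ (e d : E) (e' : E') (φ : V → V') (Φ : E → E'),
    G.o e = G.t e ∧ G.lab e = 1 ∧ G.lab (G.bar e) ≠ 1 ∧
    G.o d = G.o e ∧ G.t d ≠ G.o e ∧
    G.lab d ≠ 1 ∧ G.lab (G.bar d) ≠ 1 ∧ G.lab d ∣ G.lab (G.bar e) ∧
    (∀ x : E, G.o x = G.o e → x = e ∨ x = G.bar e ∨ x = d) ∧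
    G'.o e' = φ (G.t d) ∧ G'.t e' = φ (G.t d) ∧
    G'.lab e' = G.lab (G.bar d) ∧
    G'.lab (G'.bar e') = G.lab (G.bar d) * G.lab (G.bar e) ∧
    (∀ w₁ w₂ : V, w₁ ≠ G.o e → w₂ ≠ G.o e → φ w₁ = φ w₂ → w₁ = w₂) ∧
    (∀ v' : V', ∃ w : V, w ≠ G.o e ∧ φ w = v') ∧
    (∀ x : E, x ≠ e → x ≠ G.bar e → x ≠ d → x ≠ G.bar d →
      Φ x ≠ e' ∧ Φ x ≠ G'.bar e' ∧
      G'.o (Φ x) = φ (G.o x) ∧ G'.bar (Φ x) = Φ (G.bar x) ∧ G'.lab (Φ x) = G.lab x) ∧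
    (∀ x y : E, x ≠ e → x ≠ G.bar e → x ≠ d → x ≠ G.bar d →
      y ≠ e → y ≠ G.bar e → y ≠ d → y ≠ G.bar d → Φ x = Φ y → x = y) ∧
    (∀ y : E', y ≠ e' → y ≠ G'.bar e' →
      ∃ x : E, x ≠ e ∧ x ≠ G.bar e ∧ x ≠ d ∧ x ≠ G.bar d ∧ Φ x = y)

/-- A strict ascending loop: a loop with `λ(e) = 1 ≠ λ(ē)`. -/
def HasStrictAscendingLoop (G : LGraph V E) : Prop :=
  ∃ e : E, G.o e = G.t e ∧ G.lab e = 1 ∧ G.lab (G.bar e) ≠ 1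

end LGraph

/-- A labeled graph with its vertex and edge types bundled. -/
structure BGraph where
  V : Type
  E : Type
  G : LGraph V E

/-- An elementary deformation move: a slide, an induction move or its inverse,
or an A-move or its inverse. -/
def BGraph.ElemMove (X Y : BGraph) : Prop :=
  LGraph.IsSlideMove X.G Y.G ∨ LGraph.IsInductionMove X.G Y.G ∨
  LGraph.IsInductionMove Y.G X.G ∨ LGraph.IsAMove X.G Y.G ∨ LGraph.IsAMove Y.G X.G

/-- A finite sequence of elementary moves with all intermediate graphs reduced. -/
def BGraph.MoveSeq : BGraph → BGraph → Prop :=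
  Relation.ReflTransGen (fun X Y => X.ElemMove Y ∧ Y.G.Reduced)

/-- A reduced labeled graph is non-ascending if no reduced labeled graph obtained from it
by slide, induction and A-moves (all intermediate graphs reduced) contains a
strict ascending loop. -/
def LGraph.NonAscending {V E : Type} (G : LGraph V E) : Prop :=
  ∀ Y : BGraph, BGraph.MoveSeq ⟨V, E, G⟩ Y → ¬ Y.G.HasStrictAscendingLoop

namespace LGraph

theorem ext_aux {V E : Type} {G H : LGraph V E} (ho : ∀ x, G.o x = H.o x)
    (hb : ∀ x, G.bar x = H.bar x) (hl : ∀ x, G.lab x = H.lab x) : G = H := by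
  cases G; cases H
  simp only [LGraph.mk.injEq]
  exact ⟨funext ho, funext hb, funext hl⟩

/-- The two graphs agree away from the oriented edge `e`. -/
def AgreeOff {V E : Type} (e : E) (G H : LGraph V E) : Prop :=
  (∀ x, G.bar x = H.bar x) ∧ ∀ x, x ≠ e → G.o x = H.o x ∧ G.lab x = H.lab x

theorem slide_bar {V E : Type} (G : LGraph V E) (e a : E) : (G.slide e a).bar = G.bar := rfl

theorem slidePath_bar {V E : Type} (e : E) (l : List E) :
    ∀ G : LGraph V E, (G.slidePath e l).bar = G.bar := by
  induction l with
  | nil => intro G; rfl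
  | cons a l ih => intro G; exact ih (G.slide e a)

theorem agreeOff_slidePath {V E : Type} (e : E) (l : List E) :
    ∀ G : LGraph V E, AgreeOff e G (G.slidePath e l) := by
  induction l with
  | nil => intro G; exact ⟨fun _ => rfl, fun _ _ => ⟨rfl, rfl⟩⟩
  | cons a l ih =>
    intro G
    obtain ⟨h1, h2⟩ := ih (G.slide e a)
    refine ⟨fun x => h1 x, fun x hx => ?_⟩
    have := h2 x hx
    simpa [slidePath, slide, hx] using this

theorem AgreeOff.slide {V E : Type} {e f b : E} {G H : LGraph V E} (h : AgreeOff e G H)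
    (hfe : f ≠ e) (hb : b ≠ e) (hb' : b ≠ G.bar e) :
    AgreeOff e (G.slide f b) (H.slide f b) := by
  obtain ⟨h1, h2⟩ := h
  have hb'' : G.bar b ≠ e := fun h => hb' (by rw [← h, G.bar_bar])
  refine ⟨h1, fun x hx => ?_⟩
  have hf := h2 f hfe
  have hbb := h2 b hb
  have hbar := h2 _ hb''
  have hxx := h2 x hx
  simp only [LGraph.slide, t, ← h1]
  by_cases hxf : x = f
  · simp [hxf, hf, hbb, hbar]
  · simp [hxf, hxx]

theorem AgreeOff.canSlidePath {V E : Type} {e f : E} (hfe : f ≠ e) (B : List E) :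
    ∀ {G H : LGraph V E}, AgreeOff e G H → (∀ x ∈ B, x ≠ e ∧ x ≠ G.bar e) →
      G.CanSlidePath f B → H.CanSlidePath f B := by
  induction B with
  | nil => intros; trivial
  | cons b B ih =>
    intro G H h hB hc
    have hb := hB b (by simp)
    obtain ⟨⟨c1, c2, c3, c4⟩, hc2⟩ := hc
    refine ⟨⟨c1, ?_, ?_, ?_⟩, ?_⟩
    · rw [← h.1]; exact c2
    · rw [← (h.2 b hb.1).1, ← (h.2 f hfe).1]; exact c3
    · rw [← (h.2 b hb.1).2, ← (h.2 f hfe).2]; exact c4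
    · exact ih (h.slide hfe hb.1 hb.2) (fun x hx => hB x (by simp [hx])) hc2

theorem AgreeOff.symm {V E : Type} {e : E} {G H : LGraph V E} (h : AgreeOff e G H) :
    AgreeOff e H G :=
  ⟨fun x => (h.1 x).symm, fun x hx => ⟨(h.2 x hx).1.symm, (h.2 x hx).2.symm⟩⟩

theorem slide_comm {V E : Type} (G : LGraph V E) {e f a b : E} (hfe : f ≠ e)
    (ha : a ≠ f) (ha' : a ≠ G.bar f) (hb : b ≠ e) (hb' : b ≠ G.bar e) :
    (G.slide e a).slide f b = (G.slide f b).slide e a := by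
  have hb'' : G.bar b ≠ e := fun h => hb' (by rw [← h, G.bar_bar])
  have ha'' : G.bar a ≠ f := fun h => ha' (by rw [← h, G.bar_bar])
  apply ext_aux
  · intro x
    by_cases hxe : x = e <;> by_cases hxf : x = f <;>
      simp_all [LGraph.slide, t]
  · intro x; rfl
  · intro x
    by_cases hxe : x = e <;> by_cases hxf : x = f <;>
      simp_all [LGraph.slide, hfe.symm]

theorem slidePath_slide_comm {V E : Type} {e f a : E} (hfe : f ≠ e) (B : List E) :
    ∀ (G : LGraph V E), a ≠ f → a ≠ G.bar f → (∀ x ∈ B, x ≠ e ∧ x ≠ G.bar e) →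
    (G.slide e a).slidePath f B = (G.slidePath f B).slide e a := by
  induction B with
  | nil => intros; rfl
  | cons b B ih =>
    intro G ha ha' hB
    have hb := hB b (by simp)
    simp only [slidePath]
    rw [slide_comm G hfe ha ha' hb.1 hb.2]
    exact ih _ ha ha' (fun x hx => hB x (by simp [hx]))

theorem slidePath_comm {V E : Type} {e f : E} (hfe : f ≠ e) (B A : List E) :
    ∀ (G : LGraph V E), (∀ x ∈ A, x ≠ f ∧ x ≠ G.bar f) → (∀ x ∈ B, x ≠ e ∧ x ≠ G.bar e) →
    (G.slidePath e A).slidePath f B = (G.slidePath f B).slidePath e A := by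
  induction A with
  | nil => intros; rfl
  | cons a A ih =>
    intro G hA hB
    have ha := hA a (by simp)
    simp only [slidePath]
    rw [← slidePath_slide_comm hfe B G ha.1 ha.2 hB]
    exact ih _ (fun x hx => hA x (by simp [hx])) hB

theorem slidePath_append {V E : Type} (e : E) (l m : List E) :
    ∀ G : LGraph V E, G.slidePath e (l ++ m) = (G.slidePath e l).slidePath e m := by
  induction l with
  | nil => intro G; rfl
  | cons a l ih => intro G; exact ih _

theorem canSlidePath_append {V E : Type} (e : E) (l m : List E) :
    ∀ G : LGraph V E, G.CanSlidePath e (l ++ m) ↔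
      G.CanSlidePath e l ∧ (G.slidePath e l).CanSlidePath e m := by
  induction l with
  | nil => intro G; simp [CanSlidePath, slidePath]
  | cons a l ih => intro G; simp [CanSlidePath, slidePath, ih, and_assoc]

theorem GoodSlidePath.can {V E : Type} {e : E} (l : List E) :
    ∀ {G : LGraph V E}, G.GoodSlidePath e l → G.CanSlidePath e l := by
  induction l with
  | nil => intros; trivial
  | cons a l ih => intro G h; exact ⟨h.1, ih h.2.2⟩

theorem Positive.slide {V E : Type} {G : LGraph V E} (h : G.Positive) {e a : E}
    (hc : G.CanSlide e a) : (G.slide e a).Positive := by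
  intro x
  simp only [LGraph.slide]
  split_ifs with hx
  · obtain ⟨k, hk⟩ := hc.2.2.2
    have h1 := h a
    have h2 := h e
    have h3 := h (G.bar a)
    rw [hk, mul_assoc, Int.mul_ediv_cancel_left _ h1.ne']
    rw [hk] at h2
    have : 0 < k := pos_of_mul_pos_right h2 h1.le
    positivity
  · exact h x

theorem Positive.slidePath {V E : Type} {e : E} (l : List E) :
    ∀ {G : LGraph V E}, G.Positive → G.CanSlidePath e l → (G.slidePath e l).Positive := by
  induction l with
  | nil => intro G h _; exact h
  | cons a l ih => intro G h hc; exact ih (h.slide hc.1) hc.2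

theorem slide_core {V E : Type} {e f : E} (hfe : f ≠ e) (B : List E) :
    ∀ (H : LGraph V E), f ≠ H.bar e → H.Positive → H.CanSlide e f → H.CanSlidePath f B →
    (∀ x ∈ B, x ≠ e ∧ x ≠ H.bar e ∧ x ≠ f ∧ x ≠ H.bar f) →
    (H.slidePath f B).CanSlidePath e (B ++ [f]) ∧
    (H.slide e f).slidePath f B = (H.slidePath f B).slidePath e (B ++ [f]) := by
  induction B with
  | nil => intro H _ _ h _ _; exact ⟨⟨h, trivial⟩, rfl⟩
  | cons b B ih =>
    intro H hfb hp hc hcp hB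
    obtain ⟨b1, b2, b3, b4⟩ := hB b (by simp)
    have hB' : ∀ x ∈ B, x ≠ e ∧ x ≠ H.bar e ∧ x ≠ f ∧ x ≠ H.bar f :=
      fun x hx => hB x (by simp [hx])
    obtain ⟨hc1, hc2⟩ := hcp
    have hef : e ≠ f := hfe.symm
    have b5 : H.bar b ≠ e := fun h => b2 (by rw [← h, H.bar_bar])
    have b6 : H.bar b ≠ f := fun h => b4 (by rw [← h, H.bar_bar])
    have f5 : H.bar f ≠ e := fun h => hfb (by rw [← h, H.bar_bar])
    obtain ⟨k, hk⟩ := hc.2.2.2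
    obtain ⟨m, hm⟩ := hc1.2.2.2
    have pb := (hp b).ne'
    have pbb := (hp (H.bar b)).ne'
    have pf := (hp f).ne'
    have pm : m ≠ 0 := by rintro rfl; simp at hm; exact pf hm
    have hslide : H.CanSlide e b :=
      ⟨b1, b2, hc1.2.2.1.trans hc.2.2.1, hc1.2.2.2.trans hc.2.2.2⟩
    have hslide' : (H.slide f b).CanSlide e b := by
      obtain ⟨x1, x2, x3, x4⟩ := hslide
      refine ⟨x1, x2, ?_, ?_⟩
      · simpa [LGraph.slide, hef, b3] using x3
      · simpa [LGraph.slide, hef, b3] using x4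
    have hp1 : (H.slide f b).Positive := hp.slide hc1
    have hp2 : ((H.slide f b).slide e b).Positive := hp1.slide hslide'
    have labe : H.lab e * H.lab (H.bar b) / H.lab b = m * k * H.lab (H.bar b) := by
      rw [hk, hm, show H.lab b * m * k * H.lab (H.bar b)
        = H.lab b * (m * k * H.lab (H.bar b)) by ring, Int.mul_ediv_cancel_left _ pb]
    have labf : H.lab f * H.lab (H.bar b) / H.lab b = m * H.lab (H.bar b) := by
      rw [hm, mul_assoc, Int.mul_ediv_cancel_left _ pb]
    have hcan2 : ((H.slide f b).slide e b).CanSlide e f := by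
      refine ⟨hfe, hfb, ?_, ?_⟩
      · simp [LGraph.slide, hfe, t, b6]
      · simp only [LGraph.slide, hfe, hef, b3, b6, if_true, if_false, labe, labf]
        exact ⟨k, by ring⟩
    have key : ((H.slide f b).slide e b).slide e f = (H.slide e f).slide f b := by
      apply ext_aux
      · intro x
        by_cases hxe : x = e <;> by_cases hxf : x = f <;>
          simp_all [LGraph.slide, t, H.bar_ne]
      · intro x; rfl
      · intro x
        by_cases hxe : x = e
        · subst hxe
          simp only [LGraph.slide, hfe, hef, b3, b6, f5, H.bar_ne, if_true, if_false, labe, labf]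
          rw [hk, show m * k * H.lab (H.bar b) * H.lab (H.bar f)
            = (m * H.lab (H.bar b)) * (k * H.lab (H.bar f)) by ring,
            Int.mul_ediv_cancel_left _ (mul_ne_zero pm pbb), mul_assoc,
            Int.mul_ediv_cancel_left _ pf]
        · by_cases hxf : x = f <;> simp [LGraph.slide, hxe, hxf, hfe, b1, b5]
    have hcp2 : ((H.slide f b).slide e b).CanSlidePath f B :=
      AgreeOff.canSlidePath hfe B (agreeOff_slidePath e [b] (H.slide f b))
        (fun x hx => ⟨(hB' x hx).1, (hB' x hx).2.1⟩) hc2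
    obtain ⟨i1, i2⟩ := ih ((H.slide f b).slide e b) hfb hp2 hcan2 hcp2 hB'
    have hcomm : ((H.slide f b).slide e b).slidePath f B
        = ((H.slide f b).slidePath f B).slide e b :=
      slidePath_slide_comm hfe B (H.slide f b) b3 b4 (fun x hx => ⟨(hB' x hx).1, (hB' x hx).2.1⟩)
    rw [hcomm] at i1 i2
    refine ⟨⟨?_, i1⟩, ?_⟩
    · have := AgreeOff.canSlidePath (f := e) hef [b]
        (agreeOff_slidePath f (b :: B) H) (by simpa using ⟨b3, b4⟩) ⟨hslide, trivial⟩
      exact this.1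
    · rw [key] at i2
      exact i2

end LGraph

/-- (Lemma 4.4(k)) In a reduced non-ascending positively-labeled graph,
for mobile edges `e, f` with `f ∉ {e, ē}` and paths `A, A', B` avoiding `{e, ē, f, f̄}`:
if `e` can slide over `A·f·A'` and afterwards `f` over `B` (all slides valid, all
intermediate graphs reduced), then `f` can slide over `B` and afterwards `e` over
`A·B·f·A'`, with the same resulting labeled graph. -/
theorem stmt13 {V E : Type} [Finite V] [Finite E] (G : LGraph V E)
    (hpos : G.Positive) (hred : G.Reduced) (hna : G.NonAscending)
    (e f : E) (hme : G.Mobile e) (hmf : G.Mobile f)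
    (hfe : f ≠ e) (hfebar : f ≠ G.bar e)
    (A A' B : List E)
    (hA : ∀ x ∈ A, x ≠ e ∧ x ≠ G.bar e ∧ x ≠ f ∧ x ≠ G.bar f)
    (hA' : ∀ x ∈ A', x ≠ e ∧ x ≠ G.bar e ∧ x ≠ f ∧ x ≠ G.bar f)
    (hB : ∀ x ∈ B, x ≠ e ∧ x ≠ G.bar e ∧ x ≠ f ∧ x ≠ G.bar f)
    (h1 : G.GoodSlidePath e (A ++ f :: A'))
    (h2 : (G.slidePath e (A ++ f :: A')).GoodSlidePath f B) :
    G.CanSlidePath f B ∧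
      (G.slidePath f B).CanSlidePath e (A ++ B ++ f :: A') ∧
      (G.slidePath e (A ++ f :: A')).slidePath f B
        = (G.slidePath f B).slidePath e (A ++ B ++ f :: A') := by
  classical
  have hef : e ≠ f := hfe.symm
  have hA2 : ∀ x ∈ A, x ≠ f ∧ x ≠ G.bar f := fun x hx => (hA x hx).2.2
  have hA2' : ∀ x ∈ A', x ≠ f ∧ x ≠ G.bar f := fun x hx => (hA' x hx).2.2
  have hB2 : ∀ x ∈ B, x ≠ e ∧ x ≠ G.bar e := fun x hx => ⟨(hB x hx).1, (hB x hx).2.1⟩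
  have hc1 := LGraph.GoodSlidePath.can _ h1
  have hc2 := LGraph.GoodSlidePath.can _ h2
  have hGB : G.CanSlidePath f B :=
    LGraph.AgreeOff.canSlidePath hfe B (LGraph.agreeOff_slidePath e _ G).symm
      (by rw [LGraph.slidePath_bar]; exact hB2) hc2
  obtain ⟨hcA, hcf, hcA'⟩ := (LGraph.canSlidePath_append e A (f :: A') G).1 hc1
  have hbar : (G.slidePath e A).bar = G.bar := LGraph.slidePath_bar e A G
  have hHB : (G.slidePath e A).CanSlidePath f B :=
    LGraph.AgreeOff.canSlidePath hfe B (LGraph.agreeOff_slidePath e _ G) hB2 hGB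
  obtain ⟨k1, k2⟩ := LGraph.slide_core hfe B (G.slidePath e A) (by rw [hbar]; exact hfebar)
    (LGraph.Positive.slidePath A hpos hcA) hcf hHB (by rw [hbar]; exact hB)
  have hcomm := LGraph.slidePath_comm hfe B A G hA2 hB2
  have hcomm' := LGraph.slidePath_comm hfe B A' ((G.slidePath e A).slide e f)
    (by rw [LGraph.slide_bar, hbar]; exact hA2') (by rw [LGraph.slide_bar, hbar]; exact hB2)
  have hl : A ++ B ++ f :: A' = A ++ ((B ++ [f]) ++ A') := by simp
  refine ⟨hGB, ?_, ?_⟩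
  · rw [hl, LGraph.canSlidePath_append, LGraph.canSlidePath_append, ← hcomm]
    refine ⟨?_, k1, ?_⟩
    · exact LGraph.AgreeOff.canSlidePath hef A (LGraph.agreeOff_slidePath f B G) hA2 hcA
    · rw [← k2]
      exact LGraph.AgreeOff.canSlidePath hef A' (LGraph.agreeOff_slidePath f B _)
        (by rw [LGraph.slide_bar, hbar]; exact hA2') hcA'
  · rw [hl, LGraph.slidePath_append, LGraph.slidePath_append, LGraph.slidePath_append, ← hcomm,
      ← k2]
    exact hcomm'
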